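/- arXiv:2504.07226 — 4 statements merged into one kernel-verified Lean document; each statement's English description precedes it below -/
import Mathlib

section
/- Let N ≥ 1 and n ≥ 1, and let L_1, …, L_n ∈ ℝ^{N×N} be graph Laplacians each of whose associated digraphs contains a directed spanning tree. Then every solution x : ℝ_{≥0} → ℝ^N of the linear serial consensus system (d/dt + L_n)(d/dt + L_{n−1})⋯(d/dt + L_1)(x) = 0 achieves nth-order consensus: |x_i^{(k)}(t) − x_j^{(k)}(t)| → 0 as t → ∞ for all i ≠ j and all k = 0,…,n−1. -/
/-!
Write `ξ k` for the `k`-th partial composition applied to `x`, so that on `t ≥ 0` the system becomes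
the cascade `ξ k' = -L k ξ k + ξ (k+1)` with `ξ n = 0` (`hasDerivAt_compOpSeq`).

Stability of one stage: `P τ = exp (-τ L)` is row-stochastic for `τ ≥ 0`, because `-L` is a
nonnegative matrix minus a multiple of the identity and `L 𝟙 = 0`; a spanning tree rooted at `k`
makes the `k`-th column of `P 1` strictly positive (`exists_semigroup`). Hence `P 1` contracts the
spread `max - min` by a factor `q < 1` (Dobrushin), and `P τ` never increases it (`spread_mulVec`).
Differentiating `s ↦ P (t + 1 - s) (ξ s)` turns this into: the spread of the state at `t + 1` is at
most `q` times its spread at `t` plus the largest spread of the input on `[t, t + 1]`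
(`spread_step`). So if the input reaches consensus, the state does too (`consensus_step`), and
descending along the cascade from `ξ n = 0` every `ξ k` reaches consensus.

Derivatives: for `t > 0` the `k`-th derivative of `x` is a linear combination of terms
`A (ξ j t)`, `j ≤ k`, where `𝟙` is an eigenvector of `A` (`exists_deriv_mem_derivSpan`), and such
matrices preserve consensus.
-/


open Filter Topology

noncomputable section

/-- The all-ones vector in `ℝ^N`. -/
def onesVec (N : ℕ) : Fin N → ℝ := fun _ => 1

/-- A function `ℝ → ℝ^N` achieves (first-order) consensus. -/
def AchievesConsensus {N : ℕ} (x : ℝ → Fin N → ℝ) : Prop :=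
  ∀ i j : Fin N, i ≠ j →
    Tendsto (fun t => |x t i - x t j|) atTop (nhds 0)

/-- `x` achieves `n`-th order consensus. -/
def AchievesNthOrderConsensus {N : ℕ} (n : ℕ) (x : ℝ → Fin N → ℝ) : Prop :=
  ∀ k < n, ∀ i j : Fin N, i ≠ j →
    Tendsto (fun t => |iteratedDeriv k x t i - iteratedDeriv k x t j|) atTop (nhds 0)

/-- Class-K function: continuous, nonnegative and strictly increasing on `[0,∞)`. -/
def IsClassK (γ : ℝ → ℝ) : Prop :=
  ContinuousOn γ (Set.Ici 0) ∧ (∀ r, 0 ≤ r → 0 ≤ γ r) ∧ StrictMonoOn γ (Set.Ici 0)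

/-- Class-KL function. -/
def IsClassKL (β : ℝ → ℝ → ℝ) : Prop :=
  ContinuousOn (fun p : ℝ × ℝ => β p.1 p.2) (Set.Ici 0 ×ˢ Set.Ici 0) ∧
  (∀ s, 0 ≤ s → IsClassK (fun r => β r s)) ∧
  (∀ r, 0 ≤ r → AntitoneOn (β r) (Set.Ici 0) ∧ Tendsto (β r) atTop (nhds 0))

/-- A seminorm-like function on `ℝ^N` (triangle inequality and absolute homogeneity). -/
def IsSeminormFun {N : ℕ} (p : (Fin N → ℝ) → ℝ) : Prop :=
  (∀ x y : Fin N → ℝ, p (x + y) ≤ p x + p y) ∧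
  (∀ (a : ℝ) (x : Fin N → ℝ), p (a • x) = |a| * p x)

/-- (A1) Relative feedback. -/
def RelativeFeedback {N : ℕ} (𝓛 : (Fin N → ℝ) → ℝ → Fin N → ℝ) : Prop :=
  ∀ (z : Fin N → ℝ) (a t : ℝ), 0 ≤ t → 𝓛 (z + a • onesVec N) t = 𝓛 z t

/-- Piecewise continuity: on each compact interval, continuity fails at most on a finite set. -/
def PiecewiseContinuous {E : Type*} [TopologicalSpace E] (f : ℝ → E) : Prop :=
  ∀ a b : ℝ, ∃ s : Finset ℝ, ∀ t ∈ Set.Icc a b, t ∉ s → ContinuousAt f t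

/-- (A2) Uniform Lipschitz in the state, piecewise continuous in time. -/
def LipschitzAssumption {N : ℕ} (𝓛 : (Fin N → ℝ) → ℝ → Fin N → ℝ) : Prop :=
  (∃ C > 0, ∀ (z y : Fin N → ℝ) (t : ℝ), 0 ≤ t → ‖𝓛 z t - 𝓛 y t‖ ≤ C * ‖z - y‖) ∧
  (∀ z : Fin N → ℝ, PiecewiseContinuous (fun t => 𝓛 z t))

/-- (A3) ISS with respect to a seminorm vanishing exactly on the consensus subspace. -/
def ISSAssumption {N : ℕ} (𝓛 : (Fin N → ℝ) → ℝ → Fin N → ℝ) : Prop :=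
  ∃ p : (Fin N → ℝ) → ℝ, IsSeminormFun p ∧
    (∀ z : Fin N → ℝ, p z = 0 ↔ ∃ c : ℝ, z = c • onesVec N) ∧
    ∃ M > (0:ℝ), ∃ β γ : _, IsClassKL β ∧ IsClassK γ ∧
      ∀ (T₀ : ℝ), 0 ≤ T₀ → ∀ w z : ℝ → Fin N → ℝ,
        (∀ t, T₀ ≤ t → ‖w t‖ ≤ M) →
        (∀ t, T₀ ≤ t → HasDerivAt z (-(𝓛 (z t) t) + w t) t) →
        ∀ t, T₀ ≤ t →
          p (z t) ≤ β (p (z T₀)) (t - T₀) + γ (sSup {r : ℝ | ∃ τ, T₀ ≤ τ ∧ r = ‖w τ‖})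

/-- (A4) Smoothness of order `m` with bounds on total time derivatives along curves. -/
def SmoothnessAssumption {N : ℕ} (m : ℕ) (𝓛 : (Fin N → ℝ) → ℝ → Fin N → ℝ) : Prop :=
  ContDiff ℝ m (fun q : (Fin N → ℝ) × ℝ => 𝓛 q.1 q.2) ∧
  ∀ j ≤ m, ∃ α : ℝ → ℝ, IsClassK α ∧
    ∀ z : ℝ → Fin N → ℝ, ContDiff ℝ j z → ∀ t : ℝ, 0 ≤ t →
      ‖iteratedDeriv j (fun s => 𝓛 (z s) s) t‖ ≤
        α (Finset.univ.sup' Finset.univ_nonempty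
            (fun i : Fin (j+1) => ‖iteratedDeriv i z t‖))

/-- Iterated first-order operator: `compOpSeq 𝓛 k x = (d/dt + 𝓛_{k-1}) ∘ ⋯ ∘ (d/dt + 𝓛_0) (x)`. -/
def compOpSeq {N : ℕ} (𝓛 : ℕ → (Fin N → ℝ) → ℝ → Fin N → ℝ) :
    ℕ → (ℝ → Fin N → ℝ) → (ℝ → Fin N → ℝ)
  | 0, x => x
  | k + 1, x => fun t => deriv (compOpSeq 𝓛 k x) t + 𝓛 k (compOpSeq 𝓛 k x t) t

/-- `x` solves the compositional consensus system of order `n`. -/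
def IsCompositionalSolution {N : ℕ} (𝓛 : ℕ → (Fin N → ℝ) → ℝ → Fin N → ℝ) (n : ℕ)
    (x : ℝ → Fin N → ℝ) : Prop :=
  (∀ k < n, ∀ t : ℝ, 0 ≤ t → DifferentiableAt ℝ (compOpSeq 𝓛 k x) t) ∧
  (∀ t : ℝ, 0 ≤ t → compOpSeq 𝓛 n x t = 0)

/-- `ξ` solves the cascade state-space form. -/
def IsCascadeSolution {N : ℕ} (𝓛 : ℕ → (Fin N → ℝ) → ℝ → Fin N → ℝ) (n : ℕ)
    (ξ : ℕ → ℝ → Fin N → ℝ) : Prop :=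
  (∀ k, k + 1 < n → ∀ t : ℝ, 0 ≤ t →
    HasDerivAt (ξ k) (-(𝓛 k (ξ k t) t) + ξ (k+1) t) t) ∧
  (∀ t : ℝ, 0 ≤ t → HasDerivAt (ξ (n-1)) (-(𝓛 (n-1) (ξ (n-1) t) t)) t)

/-- A (possibly weighted) graph Laplacian. -/
def IsGraphLaplacian {N : ℕ} (L : Matrix (Fin N) (Fin N) ℝ) : Prop :=
  (∀ i j, i ≠ j → L i j ≤ 0) ∧ (∀ i, ∑ j, L i j = 0)

/-- One step along a directed edge of the digraph associated with `L`:
`stepRel L a b` iff there is an edge from `a` to `b`, i.e. `b ≠ a` and `L b a ≠ 0`. -/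
def stepRel {N : ℕ} (L : Matrix (Fin N) (Fin N) ℝ) (a b : Fin N) : Prop :=
  b ≠ a ∧ L b a ≠ 0

/-- The digraph associated with `L` contains a directed spanning tree rooted at `k`. -/
def SpanningTreeFrom {N : ℕ} (L : Matrix (Fin N) (Fin N) ℝ) (k : Fin N) : Prop :=
  ∀ i : Fin N, Relation.ReflTransGen (stepRel L) k i

/-- The digraph associated with `L` contains a directed spanning tree. -/
def HasDirectedSpanningTree {N : ℕ} (L : Matrix (Fin N) (Fin N) ℝ) : Prop :=
  ∃ k : Fin N, SpanningTreeFrom L k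

/-- Componentwise saturation. -/
def sat {N : ℕ} (y : Fin N → ℝ) : Fin N → ℝ := fun i => max (-1) (min 1 (y i))

namespace SerialConsensus

open NormedSpace

/-! ### The semigroup generated by a Laplacian -/

section Semigroup

attribute [local instance] Matrix.linftyOpNormedRing Matrix.linftyOpNormedAlgebra

lemma hasSum_exp_entry {N : ℕ} (B : Matrix (Fin N) (Fin N) ℝ) (i j : Fin N) :
    HasSum (fun m : ℕ => ((m.factorial : ℝ)⁻¹) * (B ^ m) i j) (exp B i j) := by
  have h := exp_series_hasSum_exp' (𝕂 := ℝ) B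
  exact Pi.hasSum.1 (Pi.hasSum.1 h i) j

lemma pow_entry_nonneg {N : ℕ} {B : Matrix (Fin N) (Fin N) ℝ} (hB : ∀ i j, 0 ≤ B i j) (m : ℕ) :
    ∀ i j, 0 ≤ (B ^ m) i j := by
  induction m with
  | zero => intro i j; rw [pow_zero, Matrix.one_apply]; split_ifs <;> norm_num
  | succ m ih =>
    intro i j
    rw [pow_succ', Matrix.mul_apply]
    exact Finset.sum_nonneg fun a _ => mul_nonneg (hB i a) (ih a j)

lemma exp_entry_nonneg {N : ℕ} {B : Matrix (Fin N) (Fin N) ℝ} (hB : ∀ i j, 0 ≤ B i j)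
    (i j : Fin N) : 0 ≤ exp B i j :=
  (hasSum_exp_entry B i j).nonneg fun m => mul_nonneg (by positivity) (pow_entry_nonneg hB m i j)

lemma exp_entry_pos {N : ℕ} {B : Matrix (Fin N) (Fin N) ℝ} (hB : ∀ i j, 0 ≤ B i j)
    (i j : Fin N) (m : ℕ) (hm : 0 < (B ^ m) i j) : 0 < exp B i j := by
  have h := le_hasSum (hasSum_exp_entry B i j) m
    fun l _ => mul_nonneg (by positivity) (pow_entry_nonneg hB l i j)
  exact lt_of_lt_of_le (by positivity) h

/-- A directed path from `k` to `i` of length `m` makes the `(i, k)` entry of `B ^ m` positive, for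
any nonnegative `B` that is positive along the edges. -/
lemma exists_pow_entry_pos {N : ℕ} {L B : Matrix (Fin N) (Fin N) ℝ} (hB : ∀ i j, 0 ≤ B i j)
    (hLB : ∀ a b, stepRel L a b → 0 < B b a) {k i : Fin N}
    (h : Relation.ReflTransGen (stepRel L) k i) : ∃ m : ℕ, 0 < (B ^ m) i k := by
  induction h with
  | refl => exact ⟨0, by simp⟩
  | @tail a b _ hab ih =>
    obtain ⟨m, hm⟩ := ih
    refine ⟨m + 1, ?_⟩
    rw [pow_succ', Matrix.mul_apply]
    exact Finset.sum_pos' (fun c _ => mul_nonneg (hB b c) (pow_entry_nonneg hB m c k))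
      ⟨a, Finset.mem_univ a, mul_pos (hLB a b hab) hm⟩

/-- The matrices `P τ = exp (-τ L)`, with the properties of them that the argument uses. -/
lemma exists_semigroup {N : ℕ} {L : Matrix (Fin N) (Fin N) ℝ} (hL : IsGraphLaplacian L)
    (hT : HasDirectedSpanningTree L) :
    ∃ P : ℝ → Matrix (Fin N) (Fin N) ℝ,
      (∀ τ i j, HasDerivAt (fun u => P u i j) (-(P τ * L) i j) τ) ∧ P 0 = 1 ∧
      (∀ τ, 0 ≤ τ → ∀ i j, 0 ≤ P τ i j) ∧ (∀ τ i, ∑ j, P τ i j = 1) ∧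
      ∃ k, ∀ i, 0 < P 1 i k := by
  obtain ⟨hoff, hrow⟩ := hL
  obtain ⟨k, hk⟩ := hT
  -- `c` dominates the diagonal of `L`, which makes `B` entrywise nonnegative.
  set c : ℝ := ∑ i, |L i i| with hc
  set B : Matrix (Fin N) (Fin N) ℝ := c • 1 - L with hBdef
  have hB : ∀ i j, 0 ≤ B i j := by
    intro i j
    by_cases hij : i = j
    · subst hij
      have h1 : |L i i| ≤ c :=
        Finset.single_le_sum (f := fun i => |L i i|) (fun _ _ => abs_nonneg _) (Finset.mem_univ i)
      have h2 := le_abs_self (L i i)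
      simp [hBdef]; linarith
    · have := hoff i j hij
      simp [hBdef, hij]; exact this
  have hLB : ∀ a b, stepRel L a b → 0 < B b a := by
    rintro a b ⟨hne, h0⟩
    have := lt_of_le_of_ne (hoff b a hne) h0
    simp [hBdef, hne]; exact this
  set P : ℝ → Matrix (Fin N) (Fin N) ℝ := fun τ => Real.exp (-c * τ) • exp (τ • B) with hP
  have hder : ∀ τ i j, HasDerivAt (fun u => P u i j) (-(P τ * L) i j) τ := by
    intro τ i j
    have h1 : HasDerivAt (fun u : ℝ => exp (u • B)) (exp (τ • B) * B) τ :=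
      hasDerivAt_exp_smul_const B τ
    have h2 : HasDerivAt (fun u : ℝ => exp (u • B) i j) ((exp (τ • B) * B) i j) τ :=
      hasDerivAt_pi.1 (hasDerivAt_pi.1 h1 i) j
    have h3 : HasDerivAt (fun u : ℝ => Real.exp (-c * u)) (Real.exp (-c * τ) * (-c * 1)) τ :=
      ((hasDerivAt_id τ).const_mul (-c)).exp
    have h4 := h3.mul h2
    refine h4.congr_deriv ?_
    have h5 : exp (τ • B) * B = c • exp (τ • B) - exp (τ • B) * L := by
      rw [hBdef, mul_sub]; simp
    rw [h5]
    simp only [hP, Matrix.smul_mul, Matrix.smul_apply, Matrix.sub_apply, smul_eq_mul]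
    ring
  have hP0 : P 0 = 1 := by simp [hP]
  refine ⟨P, hder, hP0, ?_, ?_, k, ?_⟩
  · intro τ hτ i j
    exact mul_nonneg (Real.exp_pos _).le
      (exp_entry_nonneg (fun i j => mul_nonneg hτ (hB i j)) i j)
  · -- The row sums have derivative `-(P τ L 𝟙) i = 0` and equal `1` at `τ = 0`.
    intro τ i
    have hs : ∀ u, HasDerivAt (fun u => ∑ j, P u i j) 0 u := by
      intro u
      refine (HasDerivAt.fun_sum fun j _ => hder u i j).congr_deriv ?_
      simp only [Matrix.mul_apply, Finset.sum_neg_distrib]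
      rw [Finset.sum_comm]
      simp [← Finset.mul_sum, hrow]
    have := is_const_of_deriv_eq_zero (fun u => (hs u).differentiableAt) (fun u => (hs u).deriv) τ 0
    simpa [hP0, Matrix.one_apply] using this
  · intro i
    obtain ⟨m, hm⟩ := exists_pow_entry_pos hB hLB (hk i)
    have := exp_entry_pos hB i k m hm
    simp only [hP, one_smul, Matrix.smul_apply, smul_eq_mul]
    positivity

end Semigroup

/-! ### Contraction of the spread -/

/-- The spread `max y - min y` of the vector `y` is at most `d`. -/
def SpreadLE {N : ℕ} (y : Fin N → ℝ) (d : ℝ) : Prop := ∀ i j, y i - y j ≤ d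

/-- Dobrushin contraction: a row-stochastic matrix with a column bounded below by `α` contracts the
spread by `1 - α`. With `α = 0` this is nonexpansiveness. -/
lemma spread_mulVec {N : ℕ} {P : Matrix (Fin N) (Fin N) ℝ} (h0 : ∀ i j, 0 ≤ P i j)
    (h1 : ∀ i, ∑ j, P i j = 1) {α : ℝ} (hα : α ≤ 1) {k : Fin N} (hk : ∀ i, α ≤ P i k)
    {y : Fin N → ℝ} {d : ℝ} (hy : SpreadLE y d) : SpreadLE (P.mulVec y) ((1 - α) * d) := by
  intro i j
  have : Nonempty (Fin N) := ⟨k⟩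
  obtain ⟨a, ha⟩ := Finite.exists_max y
  obtain ⟨b, hb⟩ := Finite.exists_min y
  have hi : P.mulVec y i ≤ y a - α * (y a - y k) := by
    have h2 : P i k * (y a - y k) ≤ ∑ c, P i c * (y a - y c) :=
      Finset.single_le_sum (f := fun c => P i c * (y a - y c))
        (fun c _ => mul_nonneg (h0 i c) (sub_nonneg.2 (ha c))) (Finset.mem_univ k)
    have h3 : ∑ c, P i c * (y a - y c) = y a - P.mulVec y i := by
      simp only [mul_sub, Finset.sum_sub_distrib, ← Finset.sum_mul, h1, one_mul]
      rfl
    have h4 := mul_le_mul_of_nonneg_right (hk i) (sub_nonneg.2 (ha k))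
    linarith
  have hj : y b + α * (y k - y b) ≤ P.mulVec y j := by
    have h2 : P j k * (y k - y b) ≤ ∑ c, P j c * (y c - y b) :=
      Finset.single_le_sum (f := fun c => P j c * (y c - y b))
        (fun c _ => mul_nonneg (h0 j c) (sub_nonneg.2 (hb c))) (Finset.mem_univ k)
    have h3 : ∑ c, P j c * (y c - y b) = P.mulVec y j - y b := by
      simp only [mul_sub, Finset.sum_sub_distrib, ← Finset.sum_mul, h1, one_mul]
      rfl
    have h4 := mul_le_mul_of_nonneg_right (hk j) (sub_nonneg.2 (hb k))
    linarith
  have h5 := mul_le_mul_of_nonneg_left (hy a b) (sub_nonneg.2 hα)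
  linarith

lemma exists_contraction {N : ℕ} {P : Matrix (Fin N) (Fin N) ℝ} (h0 : ∀ i j, 0 ≤ P i j)
    (h1 : ∀ i, ∑ j, P i j = 1) {k : Fin N} (hk : ∀ i, 0 < P i k) :
    ∃ q : ℝ, 0 ≤ q ∧ q < 1 ∧ ∀ y d, SpreadLE y d → SpreadLE (P.mulVec y) (q * d) := by
  have : Nonempty (Fin N) := ⟨k⟩
  obtain ⟨b, hb⟩ := Finite.exists_min fun i => P i k
  have hb1 : P b k ≤ 1 := by
    rw [← h1 b]
    exact Finset.single_le_sum (fun j _ => h0 b j) (Finset.mem_univ k)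
  exact ⟨1 - P b k, by linarith, by linarith [hk b], fun y d hy => spread_mulVec h0 h1 hb1 hb hy⟩

/-- One unit of time of `ξ' = -L ξ + w`. -/
lemma spread_step {N : ℕ} {L : Matrix (Fin N) (Fin N) ℝ} {P : ℝ → Matrix (Fin N) (Fin N) ℝ}
    (hder : ∀ τ i j, HasDerivAt (fun u => P u i j) (-(P τ * L) i j) τ) (hP0 : P 0 = 1)
    (h0 : ∀ τ, 0 ≤ τ → ∀ i j, 0 ≤ P τ i j) (h1 : ∀ τ i, ∑ j, P τ i j = 1)
    {q : ℝ} (hq : ∀ y d, SpreadLE y d → SpreadLE ((P 1).mulVec y) (q * d))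
    {ξ w : ℝ → Fin N → ℝ} {t ε d : ℝ}
    (hξ : ∀ s, t ≤ s → HasDerivAt ξ (w s - L.mulVec (ξ s)) s)
    (hw : ∀ s, t ≤ s → SpreadLE (w s) ε) (hd : SpreadLE (ξ t) d) :
    SpreadLE (ξ (t + 1)) (q * d + ε) := by
  intro i j
  set v : ℝ → Fin N → ℝ := fun s => (P (t + 1 - s)).mulVec (ξ s) with hv
  have hv' : ∀ s, t ≤ s → ∀ i, HasDerivAt (fun s => v s i) ((P (t + 1 - s)).mulVec (w s) i) s := by
    intro s hs i
    have hterm : ∀ a, HasDerivAt (fun u => P (t + 1 - u) i a * ξ u a)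
        ((P (t + 1 - s) * L) i a * ξ s a + P (t + 1 - s) i a * (w s - L.mulVec (ξ s)) a) s := by
      intro a
      have h2 : HasDerivAt (fun u => P (t + 1 - u) i a) ((P (t + 1 - s) * L) i a) s := by
        have := (hder (t + 1 - s) i a).comp s ((hasDerivAt_id s).const_sub (t + 1))
        refine this.congr_deriv ?_
        ring
      exact h2.mul (hasDerivAt_pi.1 (hξ s hs) a)
    have e0 : (fun s => v s i) = fun u => ∑ a, P (t + 1 - u) i a * ξ u a := rfl
    rw [e0]
    refine (HasDerivAt.fun_sum fun a _ => hterm a).congr_deriv ?_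
    have e1 : ∑ a, (P (t + 1 - s) * L) i a * ξ s a
        = (P (t + 1 - s)).mulVec (L.mulVec (ξ s)) i := by
      rw [Matrix.mulVec_mulVec]; rfl
    have e2 : ∑ a, P (t + 1 - s) i a * (w s - L.mulVec (ξ s)) a
        = (P (t + 1 - s)).mulVec (w s - L.mulVec (ξ s)) i := rfl
    rw [Finset.sum_add_distrib, e1, e2, Matrix.mulVec_sub, Pi.sub_apply]
    ring
  have hg : ∀ s ∈ Set.Icc t (t + 1), HasDerivAt (fun s => v s i - v s j)
      ((P (t + 1 - s)).mulVec (w s) i - (P (t + 1 - s)).mulVec (w s) j) s :=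
    fun s hs => (hv' s hs.1 i).sub (hv' s hs.1 j)
  have hmv := (convex_Icc t (t + 1)).image_sub_le_mul_sub_of_deriv_le
    (f := fun s => v s i - v s j) (C := ε)
    (fun s hs => (hg s hs).continuousAt.continuousWithinAt)
    (fun s hs => (hg s (interior_subset hs)).differentiableAt.differentiableWithinAt)
    (by
      intro s hs
      have hs' := interior_subset hs
      rw [(hg s hs').deriv]
      have hn : ∀ a b, 0 ≤ P (t + 1 - s) a b := h0 _ (by linarith [hs'.2])
      have := spread_mulVec hn (h1 _) zero_le_one (k := i) (fun a => hn a i) (hw s hs'.1) i j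
      simpa using this)
    t (by simp) (t + 1) (by simp) (by linarith)
  have e1 : v (t + 1) = ξ (t + 1) := by simp [hv, hP0]
  have e2 : v t = (P 1).mulVec (ξ t) := by simp [hv]
  simp only [e1, e2] at hmv
  have := hq _ _ hd i j
  linarith

/-! ### Consensus through one stage of the cascade -/

/-- All pairwise differences of the components of `f` tend to zero. -/
def Consensus {N : ℕ} (f : ℝ → Fin N → ℝ) : Prop :=
  ∀ i j, Tendsto (fun t => f t i - f t j) atTop (𝓝 0)

lemma consensus_iff {N : ℕ} (f : ℝ → Fin N → ℝ) :
    Consensus f ↔ ∀ ε > 0, ∀ᶠ t in atTop, SpreadLE (f t) ε := by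
  constructor
  · intro h ε hε
    refine eventually_all.2 fun i => eventually_all.2 fun j => ?_
    exact (h i j).eventually_le_const hε
  · intro h i j
    rw [Metric.tendsto_nhds]
    intro ε hε
    filter_upwards [h (ε / 2) (by linarith)] with t ht
    rw [Real.dist_eq, sub_zero, abs_lt]
    constructor <;> linarith [ht i j, ht j i]

/-- The state of `ξ' = -L ξ + w` reaches consensus whenever the input `w` does. -/
lemma consensus_step {N : ℕ} {L : Matrix (Fin N) (Fin N) ℝ} (hL : IsGraphLaplacian L)
    (hT : HasDirectedSpanningTree L) {ξ w : ℝ → Fin N → ℝ}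
    (hξ : ∀ s, 0 ≤ s → HasDerivAt ξ (w s - L.mulVec (ξ s)) s) (hw : Consensus w) :
    Consensus ξ := by
  obtain ⟨P, hder, hP0, h0, h1, k, hk⟩ := exists_semigroup hL hT
  obtain ⟨q, hq0, hq1, hq⟩ := exists_contraction (h0 1 zero_le_one) (h1 1) hk
  rw [consensus_iff] at hw ⊢
  intro ε hε
  -- An input spread of `(1 - q) * (ε / 2)` sustains a state spread of at most `ε / 2`.
  obtain ⟨T₀, hT₀⟩ := eventually_atTop.1 (hw ((1 - q) * (ε / 2)) (by nlinarith))
  set T := max T₀ 0 with hTdef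
  have hT0 : 0 ≤ T := le_max_right _ _
  obtain ⟨C, hC⟩ : ∃ C : ℝ, ∀ t ∈ Set.Icc T (T + 1), SpreadLE (ξ t) C := by
    have hcont : ContinuousOn ξ (Set.Icc T (T + 1)) := fun s hs =>
      (hξ s (hT0.trans hs.1)).continuousAt.continuousWithinAt
    obtain ⟨C, hC⟩ := isCompact_Icc.exists_bound_of_continuousOn hcont
    refine ⟨C + C, fun t ht i j => ?_⟩
    have hi := (norm_le_pi_norm (ξ t) i).trans (hC t ht)
    have hj := (norm_le_pi_norm (ξ t) j).trans (hC t ht)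
    rw [Real.norm_eq_abs, abs_le] at hi hj
    linarith
  have hmain : ∀ m : ℕ, ∀ t ∈ Set.Icc T (T + 1), SpreadLE (ξ (t + m)) (q ^ m * C + ε / 2) := by
    intro m
    induction m with
    | zero =>
      intro t ht i j
      have := hC t ht i j
      simp only [Nat.cast_zero, add_zero, pow_zero, one_mul]
      linarith
    | succ m ih =>
      intro t ht
      have hm : (0 : ℝ) ≤ m := Nat.cast_nonneg m
      have htm : T ≤ t + m := by linarith [ht.1]
      have := spread_step hder hP0 h0 h1 hq (t := t + m)
        (fun s hs => hξ s (hT0.trans (htm.trans hs)))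
        (fun s hs => hT₀ s ((le_max_left _ _).trans (htm.trans hs))) (ih t ht)
      have e : q ^ (m + 1) * C + ε / 2 = q * (q ^ m * C + ε / 2) + (1 - q) * (ε / 2) := by ring
      rw [e]
      push_cast
      rw [← add_assoc]
      exact this
  have hlim : Tendsto (fun m : ℕ => q ^ m * C) atTop (𝓝 0) := by
    simpa using (tendsto_pow_atTop_nhds_zero_of_lt_one hq0 hq1).mul_const C
  have hfl : Tendsto (fun t : ℝ => ⌊t - T⌋₊) atTop atTop :=
    tendsto_nat_floor_atTop.comp (tendsto_atTop_add_const_right _ (-T) tendsto_id)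
  filter_upwards [hfl.eventually (hlim.eventually_le_const (half_pos hε)), eventually_ge_atTop T]
    with t ht htT i j
  have hf1 := Nat.floor_le (sub_nonneg.2 htT)
  have hf2 := Nat.lt_floor_add_one (t - T)
  have := hmain ⌊t - T⌋₊ (t - ⌊t - T⌋₊) ⟨by linarith, by linarith⟩ i j
  rw [sub_add_cancel] at this
  linarith

/-! ### Derivatives of the solution -/

/-- The span of the curves `A (ξ j t)` with `j ≤ k` and `A` a matrix having `𝟙` as an
eigenvector. -/
def derivSpan {N : ℕ} (ξ : ℕ → ℝ → Fin N → ℝ) (k : ℕ) : Submodule ℝ (ℝ → Fin N → ℝ) :=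
  Submodule.span ℝ {f | ∃ j ≤ k, ∃ A : Matrix (Fin N) (Fin N) ℝ,
    (∃ c : ℝ, ∀ i, ∑ a, A i a = c) ∧ f = fun t => A.mulVec (ξ j t)}

lemma exists_deriv_mem_derivSpan {N n : ℕ} {L : ℕ → Matrix (Fin N) (Fin N) ℝ}
    (hLap : ∀ k < n, IsGraphLaplacian (L k)) {ξ : ℕ → ℝ → Fin N → ℝ}
    (hξ : ∀ k < n, ∀ t, 0 ≤ t → HasDerivAt (ξ k) (ξ (k + 1) t - (L k).mulVec (ξ k t)) t)
    {k : ℕ} (hk : k < n) {f : ℝ → Fin N → ℝ} (hf : f ∈ derivSpan ξ k) :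
    ∃ g ∈ derivSpan ξ (k + 1), ∀ t, 0 ≤ t → HasDerivAt f (g t) t := by
  induction hf using Submodule.span_induction with
  | mem f hf =>
    obtain ⟨j, hj, A, ⟨c, hc⟩, rfl⟩ := hf
    refine ⟨(fun t => A.mulVec (ξ (j + 1) t)) - fun t => (A * L j).mulVec (ξ j t),
      Submodule.sub_mem _ (Submodule.subset_span ⟨j + 1, by omega, A, ⟨c, hc⟩, rfl⟩)
        (Submodule.subset_span ⟨j, by omega, A * L j, ⟨0, fun i => ?_⟩, rfl⟩), fun t ht => ?_⟩
    · simp only [Matrix.mul_apply]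
      rw [Finset.sum_comm]
      simp [← Finset.mul_sum, (hLap j (by omega)).2]
    · have h := (A.mulVecLin.toContinuousLinearMap.hasFDerivAt
        (x := ξ j t)).comp_hasDerivAt t (hξ j (by omega) t ht)
      refine h.congr_deriv ?_
      simp [Matrix.mulVec_sub]
  | zero => exact ⟨0, Submodule.zero_mem _, fun t _ => hasDerivAt_const t 0⟩
  | add f₁ f₂ _ _ h₁ h₂ =>
    obtain ⟨g₁, hg₁, hd₁⟩ := h₁
    obtain ⟨g₂, hg₂, hd₂⟩ := h₂
    exact ⟨g₁ + g₂, Submodule.add_mem _ hg₁ hg₂, fun t ht => (hd₁ t ht).add (hd₂ t ht)⟩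
  | smul r f _ h =>
    obtain ⟨g, hg, hd⟩ := h
    exact ⟨r • g, Submodule.smul_mem _ r hg, fun t ht => (hd t ht).const_smul r⟩

lemma consensus_of_mem_derivSpan {N : ℕ} {ξ : ℕ → ℝ → Fin N → ℝ} {k : ℕ}
    (hξ : ∀ j ≤ k, Consensus (ξ j)) {f : ℝ → Fin N → ℝ} (hf : f ∈ derivSpan ξ k) :
    Consensus f := by
  induction hf using Submodule.span_induction with
  | mem f hf =>
    obtain ⟨j, hj, A, ⟨c, hc⟩, rfl⟩ := hf
    intro a b
    -- Equal row sums allow subtracting the reference component `ξ j t a` from every component.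
    have e : ∀ t, A.mulVec (ξ j t) a - A.mulVec (ξ j t) b
        = ∑ l, (A a l - A b l) * (ξ j t l - ξ j t a) := by
      intro t
      simp only [sub_mul, mul_sub, Finset.sum_sub_distrib, ← Finset.sum_mul, hc, sub_self,
        sub_zero]
      rfl
    simp only [e]
    have := tendsto_finsetSum Finset.univ
      fun l _ => (hξ j hj l a).const_mul (A a l - A b l)
    simpa using this
  | zero => intro a b; simp
  | add f₁ f₂ _ _ h₁ h₂ =>
    intro a b
    have := (h₁ a b).add (h₂ a b)
    rw [add_zero] at this
    refine this.congr fun t => ?_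
    simp only [Pi.add_apply]
    ring
  | smul r f _ h =>
    intro a b
    have := (h a b).const_mul r
    rw [mul_zero] at this
    refine this.congr fun t => ?_
    simp only [Pi.smul_apply, smul_eq_mul]
    ring

lemma exists_iteratedDeriv_eq {N n : ℕ} {L : ℕ → Matrix (Fin N) (Fin N) ℝ}
    (hLap : ∀ k < n, IsGraphLaplacian (L k)) {ξ : ℕ → ℝ → Fin N → ℝ}
    (hξ : ∀ k < n, ∀ t, 0 ≤ t → HasDerivAt (ξ k) (ξ (k + 1) t - (L k).mulVec (ξ k t)) t)
    {k : ℕ} (hk : k ≤ n) :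
    ∃ g ∈ derivSpan ξ k, ∀ t, 0 < t → iteratedDeriv k (ξ 0) t = g t := by
  induction k with
  | zero =>
    refine ⟨ξ 0, Submodule.subset_span ⟨0, le_rfl, 1, ⟨1, fun i => ?_⟩, ?_⟩, fun t _ => ?_⟩
    · simp [Matrix.one_apply]
    · simp
    · simp
  | succ k ih =>
    obtain ⟨f, hf, hfe⟩ := ih (by omega)
    obtain ⟨g, hg, hd⟩ := exists_deriv_mem_derivSpan hLap hξ (by omega) hf
    refine ⟨g, hg, fun t ht => ?_⟩
    have he : iteratedDeriv k (ξ 0) =ᶠ[𝓝 t] f := by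
      filter_upwards [eventually_gt_nhds ht] with s hs using hfe s hs
    rw [iteratedDeriv_succ, he.deriv_eq, (hd t ht.le).deriv]

lemma hasDerivAt_compOpSeq {N n : ℕ} {L : ℕ → Matrix (Fin N) (Fin N) ℝ} {x : ℝ → Fin N → ℝ}
    (hx : IsCompositionalSolution (fun k z _ => (L k).mulVec z) n x) {k : ℕ} (hk : k < n)
    {t : ℝ} (ht : 0 ≤ t) :
    HasDerivAt (compOpSeq (fun k z _ => (L k).mulVec z) k x)
      (compOpSeq (fun k z _ => (L k).mulVec z) (k + 1) x t
        - (L k).mulVec (compOpSeq (fun k z _ => (L k).mulVec z) k x t)) t := by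
  refine (hx.1 k hk t ht).hasDerivAt.congr_deriv ?_
  simp [compOpSeq]

end SerialConsensus

open SerialConsensus

/-- **Proposition 1 (linear serial consensus).**
If each graph Laplacian `L_k` contains a directed spanning tree, then every
solution of `(d/dt + L_n)⋯(d/dt + L_1)(x) = 0` achieves `n`-th order
consensus. -/
theorem serial_consensus
    (N n : ℕ) (hN : 1 ≤ N) (hn : 1 ≤ n)
    (L : ℕ → Matrix (Fin N) (Fin N) ℝ)
    (hLap : ∀ k < n, IsGraphLaplacian (L k))
    (hTree : ∀ k < n, HasDirectedSpanningTree (L k))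
    (x : ℝ → Fin N → ℝ)
    (hx : IsCompositionalSolution (fun k z _ => (L k).mulVec z) n x) :
    AchievesNthOrderConsensus n x := by
  set ξ : ℕ → ℝ → Fin N → ℝ := fun k => compOpSeq (fun k z _ => (L k).mulVec z) k x with hξdef
  have hξ : ∀ k < n, ∀ t, 0 ≤ t →
      HasDerivAt (ξ k) (ξ (k + 1) t - (L k).mulVec (ξ k t)) t :=
    fun k hk t ht => hasDerivAt_compOpSeq hx hk ht
  have hcons : ∀ k ≤ n, SerialConsensus.Consensus (ξ k) := by
    intro k hk
    induction hk using Nat.decreasingInduction with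
    | self =>
      intro i j
      refine tendsto_const_nhds.congr' ?_
      filter_upwards [eventually_ge_atTop 0] with t ht
      have : ξ n t = 0 := hx.2 t ht
      simp [this]
    | of_succ k hk ih => exact consensus_step (hLap k hk) (hTree k hk) (hξ k hk) ih
  intro k hk i j _
  obtain ⟨g, hg, hge⟩ := exists_iteratedDeriv_eq hLap hξ hk.le
  have := (consensus_of_mem_derivSpan (fun l hl => hcons l (hl.trans hk.le)) hg i j).abs
  rw [abs_zero] at this
  refine this.congr' ?_
  filter_upwards [eventually_gt_atTop 0] with t ht
  rw [← hge t ht]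
  rfl

end
end

section
/- Let L ∈ ℝ^{N×N} be a graph Laplacian whose associated digraph contains a directed spanning tree. Then there exist constants M > 0 and α > 0, depending only on L, such that for every T₀ ≥ 0, every bounded piecewise continuous w : [T₀,∞) → ℝ^N and every solution z of ż(t) = −L z(t) + w(t) on [T₀,∞), the following holds for all t ≥ T₀: ‖L z(t)‖ ≤ M e^{−α(t−T₀)} ‖L z(T₀)‖ + (M/α) sup_{τ≥T₀} ‖w(τ)‖. -/
/-!
The matrix `L` generates the semigroup `e^{-tL}`. Shifting by a large multiple `d` of the identity,
`e^{-tL} = e^{-td} e^{t(d - L)}` with `d - L` entrywise nonnegative, so `e^{-tL}` preserves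
nonnegative vectors; it fixes `𝟙`, hence it does not increase the sup norm. If `k` is the root of a
spanning tree, then a path from `k` to `i` of length `m` makes the `(i, k)` entry of `(d - L)^m`
positive, so the `k`-th column of `e^{-L}` is bounded below by some `ε > 0`. A positive operator
that fixes `𝟙` and has such a column shrinks the oscillation `max x - min x` by the factor `1 - ε`
(`Osc.contract`, a Doeblin-type argument). As `L` kills constants, this gives
`‖L e^{-tL} x‖ ≤ K e^{-εt} ‖x‖` (`exists_decay`).

To bound by `‖L x‖` instead of `‖x‖`, take a generalized inverse `B`, so that `L B L = L`; then
`L e^{-tL} x = e^{-tL} L B L x = L e^{-tL} (B L x)`. Finally, the derivative of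
`τ ↦ L e^{-(t-τ)L} z(τ)` is `L e^{-(t-τ)L} w(τ)`, of norm at most `K e^{-ε(t-τ)} sup ‖w‖`, and the
mean value inequality between `T₀` and `t` gives the estimate. Working with this derivative instead
of the variation of constants formula avoids integrating `w`.
-/

open Filter Topology

noncomputable section

namespace ConsensusISS

open NormedSpace

/-- The space of bounded operators on `ℝ^N` with the sup norm. -/
abbrev Op (N : ℕ) := (Fin N → ℝ) →L[ℝ] (Fin N → ℝ)

/-- A rational normed algebra structure, needed to apply the functional equation of `exp`. -/
instance (N : ℕ) : NormedAlgebra ℚ (Op N) := NormedAlgebra.restrictScalars ℚ ℝ (Op N)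

/-- Multiplication by `L`, as a bounded operator. -/
def lapOp {N : ℕ} (L : Matrix (Fin N) (Fin N) ℝ) : Op N :=
  LinearMap.toContinuousLinearMap L.mulVecLin

@[simp] lemma lapOp_apply {N : ℕ} (L : Matrix (Fin N) (Fin N) ℝ) (x : Fin N → ℝ) :
    lapOp L x = L.mulVec x := rfl

/-- The semigroup `e^{-tA}`. -/
def flow {N : ℕ} (A : Op N) (t : ℝ) : Op N := exp (t • -A)

/-- The operator maps nonnegative vectors to nonnegative vectors. -/
def Pos {N : ℕ} (S : Op N) : Prop := ∀ x : Fin N → ℝ, 0 ≤ x → 0 ≤ S x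

/-- All entries of `x` lie in an interval of length `r`. -/
def Osc {N : ℕ} (x : Fin N → ℝ) (r : ℝ) : Prop := ∃ c : ℝ, ∀ j, c ≤ x j ∧ x j ≤ c + r

/-! ### The exponential of an operator -/

lemma hasSum_exp_apply {N : ℕ} (A : Op N) (x : Fin N → ℝ) :
    HasSum (fun n : ℕ => ((n.factorial : ℝ)⁻¹) • (A ^ n) x) (exp A x) :=
  (exp_series_hasSum_exp' (𝕂 := ℝ) A).mapL (ContinuousLinearMap.apply ℝ (Fin N → ℝ) x)

lemma hasSum_exp_apply_coord {N : ℕ} (A : Op N) (x : Fin N → ℝ) (i : Fin N) :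
    HasSum (fun n : ℕ => ((n.factorial : ℝ)⁻¹) * (A ^ n) x i) (exp A x i) :=
  (hasSum_exp_apply A x).mapL (ContinuousLinearMap.proj (R := ℝ) (φ := fun _ : Fin N => ℝ) i)

lemma exp_apply_of_apply_eq_zero {N : ℕ} {A : Op N} {x : Fin N → ℝ} (h : A x = 0) :
    exp A x = x := by
  have h1 := hasSum_exp_apply A x
  have h2 := hasSum_single (f := fun n : ℕ => ((n.factorial : ℝ)⁻¹) • (A ^ n) x) 0 (by
    intro n hn
    obtain ⟨m, rfl⟩ := Nat.exists_eq_succ_of_ne_zero hn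
    simp [pow_succ, h])
  simpa using h1.unique h2

lemma Pos.pow {N : ℕ} {S : Op N} (h : Pos S) (n : ℕ) : Pos (S ^ n) := by
  induction n with
  | zero => intro x hx; simpa using hx
  | succ n ih =>
    intro x hx
    rw [pow_succ']
    exact h _ (ih x hx)

/-- A single term of the exponential series is a lower bound for the sum. -/
lemma Pos.le_exp {N : ℕ} {S : Op N} (h : Pos S) {x : Fin N → ℝ} (hx : 0 ≤ x) (m : ℕ)
    (i : Fin N) : ((m.factorial : ℝ)⁻¹) * (S ^ m) x i ≤ exp S x i :=
  le_hasSum (hasSum_exp_apply_coord S x i) m fun n _ =>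
    mul_nonneg (by positivity) (h.pow n x hx i)

lemma Pos.exp {N : ℕ} {S : Op N} (h : Pos S) : Pos (exp S) := fun x hx i =>
  (hasSum_exp_apply_coord S x i).nonneg fun n => mul_nonneg (by positivity) (h.pow n x hx i)

lemma flow_zero {N : ℕ} (A : Op N) : flow A 0 = 1 := by simp [flow]

lemma flow_add {N : ℕ} (A : Op N) (s t : ℝ) : flow A (s + t) = flow A s * flow A t := by
  rw [flow, add_smul]
  exact exp_add_of_commute (((Commute.refl (-A)).smul_left s).smul_right t)

lemma flow_nat {N : ℕ} (A : Op N) (n : ℕ) : flow A n = flow A 1 ^ n := by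
  induction n with
  | zero => simp [flow_zero]
  | succ n ih => rw [Nat.cast_succ, flow_add, ih, pow_succ]

lemma flow_comm {N : ℕ} (A : Op N) (t : ℝ) : flow A t * A = A * flow A t := by
  have h : Commute A (t • -A) := ((Commute.refl A).neg_right).smul_right t
  exact h.exp_right.eq.symm

lemma hasDerivAt_flow {N : ℕ} (A : Op N) (t : ℝ) :
    HasDerivAt (flow A) (flow A t * -A) t :=
  hasDerivAt_exp_smul_const (𝕂 := ℝ) (-A) t

lemma flow_fix {N : ℕ} {A : Op N} {x : Fin N → ℝ} (h : A x = 0) (t : ℝ) : flow A t x = x :=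
  exp_apply_of_apply_eq_zero (by simp [h])

/-! ### Positivity of the semigroup -/

/-- The shift `∑ |L i i|` dominates the diagonal of `L`. -/
def shift {N : ℕ} (L : Matrix (Fin N) (Fin N) ℝ) : ℝ := ∑ i, |L i i|

/-- The operator `d - L` with `d = shift L`, entrywise nonnegative when `L` is a Laplacian. -/
def shifted {N : ℕ} (L : Matrix (Fin N) (Fin N) ℝ) : Op N :=
  lapOp (shift L • (1 : Matrix (Fin N) (Fin N) ℝ) - L)

lemma shifted_apply {N : ℕ} (L : Matrix (Fin N) (Fin N) ℝ) (x : Fin N → ℝ) (i : Fin N) :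
    shifted L x i = ∑ j, (shift L • (1 : Matrix (Fin N) (Fin N) ℝ) - L) i j * x j := rfl

lemma shifted_entry_nonneg {N : ℕ} {L : Matrix (Fin N) (Fin N) ℝ} (hL : IsGraphLaplacian L)
    (i j : Fin N) : 0 ≤ (shift L • (1 : Matrix (Fin N) (Fin N) ℝ) - L) i j := by
  rcases eq_or_ne i j with rfl | hij
  · have : |L i i| ≤ shift L :=
      Finset.single_le_sum (f := fun i => |L i i|) (fun _ _ => abs_nonneg _) (Finset.mem_univ i)
    simp only [Matrix.sub_apply, Matrix.smul_apply, Matrix.one_apply_eq, smul_eq_mul]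
    linarith [le_abs_self (L i i)]
  · simpa [Matrix.sub_apply, Matrix.smul_apply, Matrix.one_apply_ne hij] using hL.1 i j hij

lemma shifted_pos {N : ℕ} {L : Matrix (Fin N) (Fin N) ℝ} (hL : IsGraphLaplacian L) :
    Pos (shifted L) := fun x hx i => by
  rw [shifted_apply]
  exact Finset.sum_nonneg fun j _ => mul_nonneg (shifted_entry_nonneg hL i j) (hx j)

lemma flow_eq {N : ℕ} (L : Matrix (Fin N) (Fin N) ℝ) (t : ℝ) :
    flow (lapOp L) t = Real.exp (-(t * shift L)) • exp (t • shifted L) := by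
  have h1 : t • -lapOp L = (-(t * shift L)) • (1 : Op N) + t • shifted L := by
    ext1 x
    have : shifted L x = shift L • x - L.mulVec x := by
      change (shift L • (1 : Matrix (Fin N) (Fin N) ℝ) - L).mulVec x = _
      rw [Matrix.sub_mulVec, Matrix.smul_mulVec, Matrix.one_mulVec]
    simp only [smul_apply, neg_apply,
      add_apply, this, lapOp_apply, one_apply_eq_self]
    module
  have h2 : exp ((-(t * shift L)) • (1 : Op N)) = Real.exp (-(t * shift L)) • (1 : Op N) := by
    have := algebraMap_exp_comm (𝕂 := ℝ) (𝔸 := Op N) (-(t * shift L))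
    rw [Algebra.algebraMap_eq_smul_one, Algebra.algebraMap_eq_smul_one] at this
    rw [← this, Real.exp_eq_exp_ℝ]
  rw [flow, h1, exp_add_of_commute ((Commute.one_left _).smul_left _), h2, smul_mul_assoc, one_mul]

lemma flow_pos {N : ℕ} {L : Matrix (Fin N) (Fin N) ℝ} (hL : IsGraphLaplacian L) {t : ℝ}
    (ht : 0 ≤ t) : Pos (flow (lapOp L) t) := by
  have h : Pos (t • shifted L) := fun x hx => smul_nonneg ht (shifted_pos hL x hx)
  intro x hx
  rw [flow_eq]
  exact smul_nonneg (Real.exp_pos _).le (h.exp x hx)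

lemma lapOp_ones {N : ℕ} {L : Matrix (Fin N) (Fin N) ℝ} (hL : IsGraphLaplacian L) (c : ℝ) :
    lapOp L (fun _ => c) = 0 := by
  ext i
  simp [Matrix.mulVec, dotProduct, ← Finset.sum_mul, hL.2 i]

lemma flow_norm_le {N : ℕ} {L : Matrix (Fin N) (Fin N) ℝ} (hL : IsGraphLaplacian L) {t : ℝ}
    (ht : 0 ≤ t) (x : Fin N → ℝ) : ‖flow (lapOp L) t x‖ ≤ ‖x‖ := by
  have hb := fun j => abs_le.1 (norm_le_pi_norm x j)
  have h1 := flow_pos hL ht ((fun _ => ‖x‖) - x) (fun j => sub_nonneg.2 (hb j).2)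
  have h2 := flow_pos hL ht ((fun _ => ‖x‖) + x) (fun j => by
    have := (hb j).1
    simp only [Pi.zero_apply, Pi.add_apply]; linarith)
  rw [map_sub, flow_fix (lapOp_ones hL _)] at h1
  rw [map_add, flow_fix (lapOp_ones hL _)] at h2
  refine (pi_norm_le_iff_of_nonneg (norm_nonneg x)).2 fun i => abs_le.2 ⟨?_, ?_⟩
  · have := h2 i
    simp only [Pi.zero_apply, Pi.add_apply] at this; linarith
  · have := h1 i
    simp only [Pi.zero_apply, Pi.sub_apply] at this; linarith

/-- Following a path from the root `k` to `i` gives a power of `d - L` with positive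
`(i, k)` entry. -/
lemma exists_pow_pos {N : ℕ} {L : Matrix (Fin N) (Fin N) ℝ} (hL : IsGraphLaplacian L)
    {k i : Fin N} (h : Relation.ReflTransGen (stepRel L) k i) :
    ∃ m : ℕ, 0 < (shifted L ^ m) (Pi.single k 1) i := by
  induction h with
  | refl => exact ⟨0, by simp⟩
  | @tail a b _ hab ih =>
    obtain ⟨m, hm⟩ := ih
    refine ⟨m + 1, ?_⟩
    have h0 : (0 : Fin N → ℝ) ≤ Pi.single k 1 := Pi.single_nonneg.2 zero_le_one
    rw [pow_succ', mul_apply_eq_comp, shifted_apply]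
    refine Finset.sum_pos' (fun j _ => mul_nonneg (shifted_entry_nonneg hL b j)
      ((shifted_pos hL).pow m _ h0 j)) ⟨a, Finset.mem_univ a, mul_pos ?_ hm⟩
    have := lt_of_le_of_ne (hL.1 b a hab.1) hab.2
    simpa [Matrix.sub_apply, Matrix.smul_apply, Matrix.one_apply_ne hab.1] using this

/-- The column of `e^{-L}` indexed by the root of a spanning tree is bounded below. -/
lemma exists_column_bound {N : ℕ} {L : Matrix (Fin N) (Fin N) ℝ} (hL : IsGraphLaplacian L)
    {k : Fin N} (hk : SpanningTreeFrom L k) :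
    ∃ ε > (0 : ℝ), ε ≤ 1 ∧ ∀ i, ε ≤ flow (lapOp L) 1 (Pi.single k 1) i := by
  have h0 : (0 : Fin N → ℝ) ≤ Pi.single k 1 := Pi.single_nonneg.2 zero_le_one
  have hpos : ∀ i, 0 < flow (lapOp L) 1 (Pi.single k 1) i := fun i => by
    obtain ⟨m, hm⟩ := exists_pow_pos hL (hk i)
    rw [flow_eq, one_smul]
    refine mul_pos (Real.exp_pos _) (lt_of_lt_of_le ?_ ((shifted_pos hL).le_exp h0 m i))
    positivity
  have : Nonempty (Fin N) := ⟨k⟩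
  obtain ⟨i₀, hi₀⟩ := Finite.exists_min fun i => flow (lapOp L) 1 (Pi.single k 1) i
  exact ⟨min 1 (flow (lapOp L) 1 (Pi.single k 1) i₀), lt_min one_pos (hpos i₀), min_le_left _ _,
    fun i => (min_le_right _ _).trans (hi₀ i)⟩

/-! ### Contraction of the oscillation -/

/-- A positive operator fixing constants whose `k`-th column is at least `ε` shrinks oscillations
by the factor `1 - ε`: the image entries are averages giving weight at least `ε` to `x k`. -/
lemma Osc.contract {N : ℕ} {S : Op N} (hS : Pos S) (h1 : ∀ c : ℝ, S (fun _ => c) = fun _ => c)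
    {k : Fin N} {ε : ℝ} (hε : ∀ i, ε ≤ S (Pi.single k 1) i) {x : Fin N → ℝ} {r : ℝ}
    (hx : Osc x r) : Osc (S x) ((1 - ε) * r) := by
  obtain ⟨c, hc⟩ := hx
  have hlo := hS (x - (fun _ => c) - (x k - c) • Pi.single k 1) (fun j => by
    rcases eq_or_ne j k with rfl | hj
    · simp
    · simpa [hj] using (hc j).1)
  have hhi := hS ((fun _ => c + r) - x - (c + r - x k) • Pi.single k 1) (fun j => by
    rcases eq_or_ne j k with rfl | hj
    · simp
    · simpa [hj] using (hc j).2)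
  refine ⟨c + ε * (x k - c), fun i => ?_⟩
  have a := hlo i
  have b := hhi i
  simp only [map_sub, map_smul, h1, Pi.zero_apply, Pi.sub_apply, Pi.smul_apply,
    smul_eq_mul] at a b
  have a' := mul_le_mul_of_nonneg_left (hε i) (sub_nonneg.2 (hc k).1)
  have b' := mul_le_mul_of_nonneg_left (hε i) (sub_nonneg.2 (hc k).2)
  constructor <;> nlinarith

lemma Osc.contract_pow {N : ℕ} {S : Op N} (hS : Pos S)
    (h1 : ∀ c : ℝ, S (fun _ => c) = fun _ => c)
    {k : Fin N} {ε : ℝ} (hε : ∀ i, ε ≤ S (Pi.single k 1) i) {x : Fin N → ℝ} {r : ℝ}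
    (hx : Osc x r) (n : ℕ) : Osc ((S ^ n) x) ((1 - ε) ^ n * r) := by
  induction n with
  | zero => simpa using hx
  | succ n ih =>
    rw [pow_succ', pow_succ', mul_assoc]
    exact ih.contract hS h1 hε

lemma osc_of_norm {N : ℕ} (x : Fin N → ℝ) : Osc x (2 * ‖x‖) := by
  refine ⟨-‖x‖, fun j => ?_⟩
  have := abs_le.1 (norm_le_pi_norm x j)
  constructor <;> linarith

/-- If `A` kills constants, `A x` is controlled by the oscillation of `x`. -/
lemma Osc.norm_le {N : ℕ} {A : Op N} (hA : ∀ c : ℝ, A (fun _ => c) = 0) {x : Fin N → ℝ} {r : ℝ}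
    (hr : 0 ≤ r) (hx : Osc x r) : ‖A x‖ ≤ ‖A‖ * r := by
  obtain ⟨c, hc⟩ := hx
  have h : A x = A (x - fun _ => c) := by rw [map_sub, hA, sub_zero]
  rw [h]
  refine (A.le_opNorm _).trans (mul_le_mul_of_nonneg_left ?_ (norm_nonneg _))
  refine (pi_norm_le_iff_of_nonneg hr).2 fun j => abs_le.2 ⟨?_, ?_⟩
  · have := (hc j).1
    simp only [Pi.sub_apply]; linarith
  · have := (hc j).2
    simp only [Pi.sub_apply]; linarith

/-- Exponential decay of `L e^{-tL}`. -/
lemma exists_decay {N : ℕ} {L : Matrix (Fin N) (Fin N) ℝ} (hL : IsGraphLaplacian L)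
    {k : Fin N} {ε : ℝ} (hε0 : 0 < ε) (hε1 : ε ≤ 1)
    (hε : ∀ i, ε ≤ flow (lapOp L) 1 (Pi.single k 1) i) :
    ∃ K > (0 : ℝ), ∀ t, 0 ≤ t → ∀ x,
      ‖lapOp L (flow (lapOp L) t x)‖ ≤ K * Real.exp (-ε * t) * ‖x‖ := by
  refine ⟨2 * (‖lapOp L‖ + 1) * Real.exp ε, by positivity, fun t ht x => ?_⟩
  set n := ⌊t⌋₊ with hn
  have hnt : (n : ℝ) ≤ t := Nat.floor_le ht
  have htn : t < n + 1 := Nat.lt_floor_add_one t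
  set y := flow (lapOp L) (t - n) x with hy
  have hyx : ‖y‖ ≤ ‖x‖ := flow_norm_le hL (sub_nonneg.2 hnt) x
  have hfl : flow (lapOp L) t x = (flow (lapOp L) 1 ^ n) y := by
    rw [hy, ← flow_nat, ← mul_apply_eq_comp, ← flow_add, add_sub_cancel]
  have hpow : (1 - ε) ^ n ≤ Real.exp ε * Real.exp (-ε * t) := by
    calc (1 - ε) ^ n ≤ Real.exp (-ε) ^ n :=
          pow_le_pow_left₀ (by linarith) (Real.one_sub_le_exp_neg ε) n
      _ = Real.exp (n * -ε) := (Real.exp_nat_mul _ _).symm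
      _ ≤ Real.exp (ε + -ε * t) := Real.exp_le_exp.2 (by nlinarith)
      _ = _ := Real.exp_add _ _
  have h0 : 0 ≤ (1 - ε) ^ n := pow_nonneg (by linarith) n
  have hosc := (osc_of_norm y).contract_pow (flow_pos hL zero_le_one)
    (fun c => flow_fix (lapOp_ones hL c) 1) hε n
  rw [hfl]
  calc ‖lapOp L ((flow (lapOp L) 1 ^ n) y)‖
      ≤ ‖lapOp L‖ * ((1 - ε) ^ n * (2 * ‖y‖)) :=
        hosc.norm_le (lapOp_ones hL) (by positivity)
    _ ≤ (‖lapOp L‖ + 1) * ((Real.exp ε * Real.exp (-ε * t)) * (2 * ‖x‖)) := by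
        gcongr
        linarith
    _ = _ := by ring

/-- Every operator on a finite-dimensional space has a generalized inverse. -/
lemma exists_generalized_inverse {N : ℕ} (A : Op N) : ∃ B : Op N, ∀ x, A (B (A x)) = A x := by
  let f : (Fin N → ℝ) →ₗ[ℝ] (Fin N → ℝ) := A
  obtain ⟨g, hg⟩ := f.rangeRestrict.exists_rightInverse_of_surjective f.range_rangeRestrict
  obtain ⟨g', hg'⟩ := LinearMap.exists_extend g
  refine ⟨LinearMap.toContinuousLinearMap g', fun x => ?_⟩
  have h1 : g' (f x) = g (f.rangeRestrict x) := LinearMap.congr_fun hg' (f.rangeRestrict x)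
  have h2 := congrArg Subtype.val (LinearMap.congr_fun hg (f.rangeRestrict x))
  change f (g' (f x)) = f x
  rw [h1]
  exact h2

/-! ### The perturbed system -/

/-- Exponential decay of `A e^{-tA}` bounds the effect of a perturbation `w` of size `W`. -/
lemma norm_sub_flow_le {N : ℕ} {A : Op N} {K α : ℝ} (hK : 0 < K) (hα : 0 < α)
    (hdec : ∀ t, 0 ≤ t → ∀ x, ‖A (flow A t x)‖ ≤ K * Real.exp (-α * t) * ‖x‖)
    {T₀ t W : ℝ} (ht : T₀ ≤ t) {w z : ℝ → Fin N → ℝ} (hW : ∀ τ, T₀ ≤ τ → ‖w τ‖ ≤ W)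
    (hz : ∀ τ, T₀ ≤ τ → HasDerivAt z (-A (z τ) + w τ) τ) :
    ‖A (z t) - A (flow A (t - T₀) (z T₀))‖ ≤ K / α * W := by
  have hW0 : 0 ≤ W := (norm_nonneg _).trans (hW T₀ le_rfl)
  have hf : ∀ τ, T₀ ≤ τ → HasDerivAt
      (fun τ => A (flow A (t - τ) (z τ)) - A (flow A (t - T₀) (z T₀)))
      (A (flow A (t - τ) (w τ))) τ := fun τ hτ => by
    have h1 : HasDerivAt (fun τ => flow A (t - τ)) (flow A (t - τ) * A) τ := by
      refine ((hasDerivAt_flow A (t - τ)).scomp τ ((hasDerivAt_id τ).const_sub t)).congr_deriv ?_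
      ext1 x
      simp
    have h2 := A.hasFDerivAt.comp_hasDerivAt τ (h1.clm_apply (hz τ hτ))
    have h3 := h2.sub_const (A (flow A (t - T₀) (z T₀)))
    refine h3.congr_deriv ?_
    simp
  have hB : ∀ τ : ℝ, HasDerivAt
      (fun τ => K / α * W * (Real.exp (-α * (t - τ)) - Real.exp (-α * (t - T₀))))
      (K * Real.exp (-α * (t - τ)) * W) τ := fun τ => by
    have h1 : HasDerivAt (fun τ : ℝ => -α * (t - τ)) α τ := by
      simpa using ((hasDerivAt_id τ).const_sub t).const_mul (-α)
    refine ((h1.exp.sub_const _).const_mul (K / α * W)).congr_deriv ?_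
    field_simp
  have h := image_norm_le_of_norm_deriv_right_le_deriv_boundary
    (fun τ hτ => (hf τ hτ.1).continuousAt.continuousWithinAt)
    (fun τ hτ => (hf τ hτ.1).hasDerivWithinAt) (by simp) hB
    (fun τ hτ => (hdec _ (sub_nonneg.2 hτ.2.le) _).trans
      (mul_le_mul_of_nonneg_left (hW τ hτ.1) (by positivity)))
    (Set.right_mem_Icc.2 ht)
  simp only [sub_self, flow_zero, one_apply_eq_self, mul_zero, Real.exp_zero] at h
  refine h.trans (mul_le_of_le_one_right (by positivity) ?_)
  linarith [Real.exp_pos (-α * (t - T₀))]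

end ConsensusISS

/-- ISS estimate for the perturbed linear consensus system `ż = −Lz + w(t)`:
there exist `M, α > 0` (depending only on `L`) such that
`‖Lz(t)‖ ≤ M e^{−α(t−T₀)}‖Lz(T₀)‖ + (M/α) sup_{τ≥T₀}‖w(τ)‖`. -/
theorem linear_consensus_ISS_bound
    (N : ℕ) (hN : 1 ≤ N)
    (L : Matrix (Fin N) (Fin N) ℝ)
    (hLap : IsGraphLaplacian L) (hTree : HasDirectedSpanningTree L) :
    ∃ M > (0:ℝ), ∃ α > (0:ℝ),
      ∀ T₀ : ℝ, 0 ≤ T₀ → ∀ w z : ℝ → Fin N → ℝ,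
        PiecewiseContinuous w → (∃ C : ℝ, ∀ τ : ℝ, T₀ ≤ τ → ‖w τ‖ ≤ C) →
        (∀ t : ℝ, T₀ ≤ t → HasDerivAt z (-L.mulVec (z t) + w t) t) →
        ∀ t : ℝ, T₀ ≤ t →
          ‖L.mulVec (z t)‖ ≤
            M * Real.exp (-α * (t - T₀)) * ‖L.mulVec (z T₀)‖ +
              (M / α) * sSup {r : ℝ | ∃ τ : ℝ, T₀ ≤ τ ∧ r = ‖w τ‖} := by
  obtain ⟨k, hk⟩ := hTree
  obtain ⟨α, hα, hα1, hcol⟩ := ConsensusISS.exists_column_bound hLap hk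
  obtain ⟨K, hK, hdec⟩ := ConsensusISS.exists_decay hLap hα hα1 hcol
  set A := ConsensusISS.lapOp L with hA
  obtain ⟨B, hB⟩ := ConsensusISS.exists_generalized_inverse A
  refine ⟨K * (‖B‖ + 1), by positivity, α, hα, ?_⟩
  rintro T₀ - w z - ⟨C, hC⟩ hz t ht
  set W := sSup {r : ℝ | ∃ τ : ℝ, T₀ ≤ τ ∧ r = ‖w τ‖} with hWdef
  have hW : ∀ τ, T₀ ≤ τ → ‖w τ‖ ≤ W := fun τ hτ =>
    le_csSup ⟨C, by rintro _ ⟨σ, hσ, rfl⟩; exact hC σ hσ⟩ ⟨τ, hτ, rfl⟩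
  have hW0 : 0 ≤ W := (norm_nonneg _).trans (hW T₀ le_rfl)
  have h1 := ConsensusISS.norm_sub_flow_le hK hα hdec ht hW hz
  have hswap : ∀ x, A (ConsensusISS.flow A (t - T₀) x) = ConsensusISS.flow A (t - T₀) (A x) :=
    fun x => (DFunLike.congr_fun (ConsensusISS.flow_comm A (t - T₀)) x).symm
  have h2 : ‖A (ConsensusISS.flow A (t - T₀) (z T₀))‖ ≤
      K * Real.exp (-α * (t - T₀)) * (‖B‖ * ‖A (z T₀)‖) := by
    rw [hswap, ← hB (z T₀), ← hswap, hB]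
    exact (hdec _ (sub_nonneg.2 ht) _).trans
      (mul_le_mul_of_nonneg_left (B.le_opNorm _) (by positivity))
  have h3 : ‖A (z t)‖ ≤ ‖A (z t) - A (ConsensusISS.flow A (t - T₀) (z T₀))‖ +
      ‖A (ConsensusISS.flow A (t - T₀) (z T₀))‖ := by
    simpa using norm_add_le (A (z t) - A (ConsensusISS.flow A (t - T₀) (z T₀)))
      (A (ConsensusISS.flow A (t - T₀) (z T₀)))
  have h4 : K * Real.exp (-α * (t - T₀)) * (‖B‖ * ‖A (z T₀)‖) ≤
      K * (‖B‖ + 1) * Real.exp (-α * (t - T₀)) * ‖A (z T₀)‖ := by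
    have : 0 ≤ K * Real.exp (-α * (t - T₀)) * ‖A (z T₀)‖ := by positivity
    linarith
  have h5 : K / α * W ≤ K * (‖B‖ + 1) / α * W := by
    gcongr
    exact le_mul_of_one_le_right hK.le (by linarith [norm_nonneg B])
  change ‖A (z t)‖ ≤ K * (‖B‖ + 1) * Real.exp (-α * (t - T₀)) * ‖A (z T₀)‖ +
    K * (‖B‖ + 1) / α * W
  linarith

end
end

section
/- Let L ∈ ℝ^{N×N} be a graph Laplacian whose associated digraph contains a directed spanning tree rooted at a node i₀ whose row of L is identically zero (a leader-follower network). Then there exists d_max > 0 such that for every piecewise continuous d : ℝ_{≥0} → ℝ^N with ‖d(t)‖_∞ < d_max for all t ≥ 0 and every solution z of ż = −sat(Lz) + d(t), each agent enters and remains in the linear regime in finite time: for every i ∈ {1,…,N} there exists T_i ≥ 0 such that |(L z(t))_i| < 1 for all t ≥ T_i. -/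
/-!
After subtracting the leader's state, the network is governed by a nonsingular M-matrix: there is a
positive vector `v` with `(L v) i = 1` for every follower `i` (`exists_supersolution`; injectivity of
`L + e_{i₀} e_{i₀}ᵀ` is the maximum principle along the spanning tree, and positivity costs nothing
because `L` ignores constant shifts). Put `w = z - z i₀`. If `w ≤ b v` with equality in the follower
coordinate `i`, then `(L z) i = (L w) i ≥ b (L v) i = b`, since the off-diagonal entries are
nonpositive. So as long as `ε ≤ b` with `ε ≤ 1`, the saturated input pushes `w i` down at rate at
least `ε`, which beats disturbances of size `ε / 4` and the slow motion of the barrier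
`b t = ε + K exp (-c t)` for small `c`. Hence `w t ≤ b t • v` for all time
(`upper_barrier`, `nonpos_of_crossing`), and by the symmetry `z ↦ -z` also `-w t ≤ b t • v`.
Eventually `|w| ≤ 2 ε v`, and a small `ε` then makes every `|(L z) i|` less than `1`.
-/

open Filter Topology

noncomputable section

/-! ### A barrier principle for finite families of functions -/

/-- A finite family of differentiable functions that starts nonpositive stays nonpositive if each
member has negative derivative whenever it vanishes while the whole family is nonpositive. -/
lemma nonpos_of_crossing {ι : Type*} [Finite ι] (g g' : ι → ℝ → ℝ)
    (hg : ∀ i t, 0 ≤ t → HasDerivAt (g i) (g' i t) t)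
    (h0 : ∀ i, g i 0 ≤ 0)
    (hc : ∀ t, 0 ≤ t → (∀ j, g j t ≤ 0) → ∀ i, g i t = 0 → g' i t < 0) :
    ∀ t, 0 ≤ t → ∀ i, g i t ≤ 0 := by
  intro T hT
  have hclosed : IsClosed ({t | ∀ i, g i t ≤ 0} ∩ Set.Icc 0 T) := by
    have hset : {t | ∀ i, g i t ≤ 0} ∩ Set.Icc 0 T
        = Set.Icc 0 T ∩ (fun t i => g i t) ⁻¹' Set.Iic (0 : ι → ℝ) := by
      ext t
      simp [Pi.le_def, and_comm]
    rw [hset]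
    refine ContinuousOn.preimage_isClosed_of_isClosed ?_ isClosed_Icc isClosed_Iic
    exact continuousOn_pi.2 fun i t ht => (hg i t ht.1).continuousAt.continuousWithinAt
  refine hclosed.Icc_subset_of_forall_exists_gt h0 ?_ (Set.right_mem_Icc.2 hT)
  rintro t ⟨ht, htI⟩ y hy
  have hev : ∀ᶠ s in 𝓝[>] t, ∀ i, g i s ≤ 0 := by
    refine eventually_all.2 fun i => ?_
    rcases (ht i).lt_or_eq with hlt | heq
    · filter_upwards [nhdsWithin_le_nhds
        ((hg i t htI.1).continuousAt.eventually (gt_mem_nhds hlt))] with s hs using hs.le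
    · have hslope := hasDerivWithinAt_iff_tendsto_slope.1
        ((hg i t htI.1).hasDerivWithinAt (s := Set.Ioi t))
      rw [show Set.Ioi t \ {t} = Set.Ioi t by simp] at hslope
      have hneg := hslope.eventually (gt_mem_nhds (hc t htI.1 ht i heq))
      filter_upwards [hneg, self_mem_nhdsWithin] with s hs hst
      rw [slope_def_field, heq, sub_zero] at hs
      have hst' : 0 < s - t := sub_pos.2 hst
      by_contra! hcon
      exact absurd hs (not_lt.2 (div_nonneg hcon.le hst'.le))
  obtain ⟨s, hs, hsI⟩ := (hev.and (Ioc_mem_nhdsGT hy)).exists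
  exact ⟨s, hs, hsI⟩

/-! ### The maximum principle and a positive supersolution -/

lemma mulVec_sub_const {N : ℕ} {L : Matrix (Fin N) (Fin N) ℝ} (hLap : IsGraphLaplacian L)
    (x : Fin N → ℝ) (a : ℝ) (i : Fin N) :
    L.mulVec x i = ∑ j, L i j * (x j - a) := by
  simp only [mul_sub, Finset.sum_sub_distrib, ← Finset.sum_mul, hLap.2 i, zero_mul, sub_zero]
  rfl

/-- Maximum principle: a vector vanishing at the root and harmonic at all other nodes is
nonpositive, because its set of maximizers propagates back to the root. -/
lemma harmonic_nonpos {N : ℕ} {L : Matrix (Fin N) (Fin N) ℝ} (hLap : IsGraphLaplacian L)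
    {i₀ : Fin N} (hTree : SpanningTreeFrom L i₀) (x : Fin N → ℝ) (h0 : x i₀ = 0)
    (hx : ∀ i, i ≠ i₀ → L.mulVec x i = 0) (k : Fin N) : x k ≤ 0 := by
  have : Nonempty (Fin N) := ⟨i₀⟩
  obtain ⟨m, hm⟩ := Finite.exists_max x
  have key : ∀ i, Relation.ReflTransGen (stepRel L) i₀ i → x i = x m → x i₀ = x m := by
    intro i hi
    induction hi with
    | refl => exact id
    | @tail b c _ hbc ih =>
      intro hcm
      by_cases hc : c = i₀
      · rw [← hc, hcm]
      · refine ih ?_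
        have hsum := hx c hc
        rw [mulVec_sub_const hLap x (x m)] at hsum
        have hnn : ∀ j ∈ Finset.univ, 0 ≤ L c j * (x j - x m) := by
          intro j _
          by_cases hj : c = j
          · subst hj
            simp [hcm]
          · exact mul_nonneg_of_nonpos_of_nonpos (hLap.1 c j hj) (sub_nonpos.2 (hm j))
        have := (Finset.sum_eq_zero_iff_of_nonneg hnn).1 hsum b (Finset.mem_univ b)
        exact sub_eq_zero.1 ((mul_eq_zero.1 this).resolve_left hbc.2)
  exact (hm k).trans_eq ((key m (hTree m) rfl).symm.trans h0)

/-- Positivity comes from shifting a solution of `L v = 1` on the followers by a constant. -/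
lemma exists_supersolution {N : ℕ} {L : Matrix (Fin N) (Fin N) ℝ} (hLap : IsGraphLaplacian L)
    {i₀ : Fin N} (hTree : SpanningTreeFrom L i₀) :
    ∃ v : Fin N → ℝ, (∀ i, 0 < v i) ∧ ∀ i, i ≠ i₀ → L.mulVec v i = 1 := by
  -- `L` with the row of `i₀` replaced by the evaluation at `i₀`
  let F : (Fin N → ℝ) →ₗ[ℝ] (Fin N → ℝ) :=
    LinearMap.pi fun i => if i = i₀ then LinearMap.proj i₀
      else (LinearMap.proj i).comp L.mulVecLin
  have hF0 : ∀ x, F x i₀ = x i₀ := fun x => by simp [F]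
  have hF : ∀ x i, i ≠ i₀ → F x i = L.mulVec x i := fun x i hi => by simp [F, hi]
  have hle : ∀ x, F x = 0 → ∀ k, x k ≤ 0 := fun x hx =>
    harmonic_nonpos hLap hTree x (by rw [← hF0 x, hx]; rfl) fun i hi => by rw [← hF x i hi, hx]; rfl
  have hinj : Function.Injective F := by
    refine (injective_iff_map_eq_zero F).2 fun x hx => funext fun k => le_antisymm (hle x hx k) ?_
    have := hle (-x) (by rw [map_neg, hx, neg_zero]) k
    simpa using this
  obtain ⟨u, hu⟩ := LinearMap.injective_iff_surjective.1 hinj 1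
  have : Nonempty (Fin N) := ⟨i₀⟩
  obtain ⟨m, hm⟩ := Finite.exists_min u
  refine ⟨fun i => u i - (u m - 1), fun i => by have := hm i; linarith, fun i hi => ?_⟩
  have h1 : L.mulVec u i = 1 := by rw [← hF u i hi, hu]; rfl
  exact (mulVec_sub_const hLap u (u m - 1) i).symm.trans h1

/-! ### Trajectory bounds and the linear regime -/

/-- One-sided comparison of the offsets from the leader with an exponentially shrinking multiple
of the supersolution `v`. -/
lemma upper_barrier {N : ℕ} {L : Matrix (Fin N) (Fin N) ℝ} (hLap : IsGraphLaplacian L)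
    {i₀ : Fin N} (hleader : ∀ j, L i₀ j = 0) {v : Fin N → ℝ} (hv : ∀ i, 0 < v i)
    (hLv : ∀ i, i ≠ i₀ → L.mulVec v i = 1) {ε K c : ℝ} (hε : 0 < ε) (hε1 : ε ≤ 1) (hK : 0 < K)
    (hc : 0 < c) (hcK : ∀ i, c * K * v i ≤ ε / 4) {d z : ℝ → Fin N → ℝ}
    (hd : ∀ t : ℝ, 0 ≤ t → ‖d t‖ < ε / 4)
    (hz : ∀ t : ℝ, 0 ≤ t → HasDerivAt z (-sat (L.mulVec (z t)) + d t) t)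
    (h0 : ∀ i, z 0 i - z 0 i₀ ≤ K * v i) :
    ∀ t, 0 ≤ t → ∀ i, z t i - z t i₀ ≤ (ε + K * Real.exp (-c * t)) * v i := by
  have hzi : ∀ i t, 0 ≤ t → HasDerivAt (fun t => z t i) (-sat (L.mulVec (z t)) i + d t i) t :=
    fun i t ht => hasDerivAt_pi.1 (hz t ht) i
  have hzero : ∀ t, sat (L.mulVec (z t)) i₀ = 0 := fun t => by
    simp [sat, Matrix.mulVec, dotProduct, hleader]
  have hb : ∀ t, HasDerivAt (fun t => ε + K * Real.exp (-c * t))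
      (K * (Real.exp (-c * t) * (-c))) t := fun t => by
    have h1 : HasDerivAt (fun t : ℝ => -c * t) (-c) t := by
      simpa using (hasDerivAt_id t).const_mul (-c)
    exact (h1.exp.const_mul K).const_add ε
  have main := nonpos_of_crossing
    (fun i t => z t i - z t i₀ - (ε + K * Real.exp (-c * t)) * v i) _
    (fun i t ht => ((hzi i t ht).sub (hzi i₀ t ht)).sub ((hb t).mul_const (v i))) ?_ ?_
  · intro t ht i
    have := main t ht i
    linarith
  · intro i
    have h1 := h0 i
    have h2 := mul_pos hε (hv i)
    simp only [mul_zero, Real.exp_zero]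
    linarith
  · intro t ht hall i hi
    have hexp : 0 < Real.exp (-c * t) := Real.exp_pos _
    have hexp1 : Real.exp (-c * t) ≤ 1 := Real.exp_le_one_iff.2 (by nlinarith)
    set b := ε + K * Real.exp (-c * t) with hbdef
    have hbε : ε ≤ b := by
      have := mul_pos hK hexp
      linarith
    -- the leader's offset vanishes, so the leader cannot touch the positive barrier
    have hne : i ≠ i₀ := by
      rintro rfl
      have := mul_pos (hε.trans_le hbε) (hv i)
      linarith
    have hLz : b ≤ L.mulVec (z t) i := by
      have hbv : b = ∑ j, L i j * (b * v j) := by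
        have h1 : ∑ j, L i j * v j = 1 := hLv i hne
        calc b = b * ∑ j, L i j * v j := by rw [h1, mul_one]
          _ = _ := by
            rw [Finset.mul_sum]
            exact Finset.sum_congr rfl fun j _ => by ring
      rw [mulVec_sub_const hLap (z t) (z t i₀)]
      refine hbv.le.trans (Finset.sum_le_sum fun j _ => ?_)
      by_cases hj : i = j
      · subst hj
        rw [sub_eq_zero.1 hi]
      · have := hall j
        exact mul_le_mul_of_nonpos_left (by linarith) (hLap.1 i j hj)
    have hsat : ε ≤ sat (L.mulVec (z t)) i :=
      le_max_of_le_right (le_min hε1 (hbε.trans hLz))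
    have hdi := (abs_lt.1 ((norm_le_pi_norm (d t) i).trans_lt (hd t ht))).2
    have hd0 := (abs_lt.1 ((norm_le_pi_norm (d t) i₀).trans_lt (hd t ht))).1
    have hck : c * K * v i * Real.exp (-c * t) ≤ ε / 4 :=
      (mul_le_of_le_one_right (by have := hv i; positivity) hexp1).trans (hcK i)
    have h0' := hzero t
    have : K * (Real.exp (-c * t) * -c) * v i = -(c * K * v i * Real.exp (-c * t)) := by ring
    rw [this, h0']
    linarith

lemma sat_neg {N : ℕ} (y : Fin N → ℝ) : sat (-y) = -sat y := by
  funext i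
  simp only [sat, Pi.neg_apply]
  grind

/-- **Leader-follower case of Proposition 2.**
If `L` is a graph Laplacian with a directed spanning tree rooted at a leader
node `i₀` whose row of `L` is zero, then for sufficiently small disturbances
every agent of `ż = −sat(Lz) + d(t)` enters and remains in the linear regime
in finite time. -/
theorem saturated_leader_follower_linear_regime
    (N : ℕ) (hN : 1 ≤ N)
    (L : Matrix (Fin N) (Fin N) ℝ)
    (hLap : IsGraphLaplacian L)
    (i₀ : Fin N) (hTree : SpanningTreeFrom L i₀)
    (hleader : ∀ j : Fin N, L i₀ j = 0) :
    ∃ dmax > (0:ℝ),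
      ∀ d z : ℝ → Fin N → ℝ,
        PiecewiseContinuous d →
        (∀ t : ℝ, 0 ≤ t → ‖d t‖ < dmax) →
        (∀ t : ℝ, 0 ≤ t → HasDerivAt z (-sat (L.mulVec (z t)) + d t) t) →
        ∀ i : Fin N, ∃ T : ℝ, 0 ≤ T ∧ ∀ t : ℝ, T ≤ t → |L.mulVec (z t) i| < 1 := by
  obtain ⟨v, hv, hLv⟩ := exists_supersolution hLap hTree
  set C := ∑ i, ∑ j, |L i j| * v j + 1 with hC
  have hrow : ∀ i, ∑ j, |L i j| * v j ≤ C := fun i => by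
    have := Finset.single_le_sum (f := fun i => ∑ j, |L i j| * v j)
      (fun i _ => Finset.sum_nonneg fun j _ => mul_nonneg (abs_nonneg _) (hv j).le)
      (Finset.mem_univ i)
    linarith
  have hC1 : 1 ≤ C := by
    have : 0 ≤ ∑ i, ∑ j, |L i j| * v j := Finset.sum_nonneg fun i _ =>
      Finset.sum_nonneg fun j _ => mul_nonneg (abs_nonneg _) (hv j).le
    linarith
  set ε := 1 / (4 * C) with hεdef
  have hε : 0 < ε := by positivity
  have hεC : ε * C = 1 / 4 := by rw [hεdef]; field_simp
  have hε1 : ε ≤ 1 := by nlinarith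
  refine ⟨ε / 4, by positivity, fun d z _ hd hz i => ?_⟩
  set K := ∑ i, |z 0 i - z 0 i₀| / v i + 1 with hKdef
  have hKle : ∀ i, |z 0 i - z 0 i₀| ≤ K * v i := fun i => by
    have := Finset.single_le_sum (f := fun i => |z 0 i - z 0 i₀| / v i)
      (fun i _ => div_nonneg (abs_nonneg _) (hv i).le) (Finset.mem_univ i)
    exact (div_le_iff₀ (hv i)).1 (by linarith)
  have hK : 0 < K := by
    have : 0 ≤ ∑ i, |z 0 i - z 0 i₀| / v i :=
      Finset.sum_nonneg fun i _ => div_nonneg (abs_nonneg _) (hv i).le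
    linarith
  set S := ∑ i, v i with hSdef
  have hvS : ∀ i, v i ≤ S := fun i =>
    Finset.single_le_sum (f := v) (fun i _ => (hv i).le) (Finset.mem_univ i)
  have hS : 0 < S := (hv i₀).trans_le (hvS i₀)
  set c := ε / (4 * (K * S)) with hcdef
  have hc : 0 < c := by positivity
  have hcK : ∀ i, c * K * v i ≤ ε / 4 := fun i => by
    calc c * K * v i ≤ c * K * S := mul_le_mul_of_nonneg_left (hvS i) (by positivity)
      _ = ε / 4 := by rw [hcdef]; field_simp
  have hup := upper_barrier hLap hleader hv hLv hε hε1 hK hc hcK hd hz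
    fun i => (le_abs_self _).trans (hKle i)
  have hlow := upper_barrier hLap hleader hv hLv hε hε1 hK hc hcK (d := -d) (z := -z)
    (fun t ht => by simpa using hd t ht)
    (fun t ht => by
      have := (hz t ht).neg
      rw [neg_add, ← sat_neg, ← Matrix.mulVec_neg] at this
      exact this)
    fun i => by
      refine le_trans (le_of_eq ?_) ((neg_le_abs _).trans (hKle i))
      simp only [Pi.neg_apply]
      ring
  have hlim : Tendsto (fun t : ℝ => K * Real.exp (-c * t)) atTop (𝓝 0) := by
    have h1 : Tendsto (fun t : ℝ => -c * t) atTop atBot :=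
      tendsto_id.const_mul_atTop_of_neg (neg_lt_zero.2 hc)
    simpa using (Real.tendsto_exp_atBot.comp h1).const_mul K
  obtain ⟨T, hT⟩ := eventually_atTop.1 (hlim.eventually (gt_mem_nhds hε))
  refine ⟨max T 0, le_max_right _ _, fun t ht => ?_⟩
  have ht0 : 0 ≤ t := (le_max_right _ _).trans ht
  have hexp := hT t ((le_max_left _ _).trans ht)
  have hw : ∀ j, |z t j - z t i₀| ≤ 2 * ε * v j := fun j => by
    have h1 := hup t ht0 j
    have h2 := hlow t ht0 j
    simp only [Pi.neg_apply] at h2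
    have h3 : (ε + K * Real.exp (-c * t)) * v j ≤ 2 * ε * v j :=
      mul_le_mul_of_nonneg_right (by linarith) (hv j).le
    exact abs_le.2 ⟨by linarith, by linarith⟩
  rw [mulVec_sub_const hLap (z t) (z t i₀)]
  calc |∑ j, L i j * (z t j - z t i₀)| ≤ ∑ j, |L i j * (z t j - z t i₀)| :=
        Finset.abs_sum_le_sum_abs _ _
    _ ≤ ∑ j, 2 * ε * (|L i j| * v j) := Finset.sum_le_sum fun j _ => by
        rw [abs_mul]
        have := mul_le_mul_of_nonneg_left (hw j) (abs_nonneg (L i j))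
        linarith
    _ = 2 * ε * ∑ j, |L i j| * v j := by rw [Finset.mul_sum]
    _ ≤ 2 * ε * C := mul_le_mul_of_nonneg_left (hrow i) (by positivity)
    _ < 1 := by linarith

end
end

section
/- Fix a ∈ ℝ, z₀₀, z₁₀ ∈ ℝ and τ_max > 0, and consider the two-agent delayed consensus dynamics on [0, τ_max] with delay τ(t) = t: ż₀(t) = a and ż₁(t) = −z₁(t) + z₀(t − τ(t)) + a = −z₁(t) + z₀(0) + a, with z₀(0) = z₀₀ and z₁(0) = z₁₀. Then the unique solutions are z₀(t) = a t + z₀₀ and z₁(t) = e^{−t} z₁₀ + (a + z₀₀)(1 − e^{−t}) for t ∈ [0, τ_max]. In particular, if the system is initialized at consensus (z₁₀ = z₀₀), then z₀(t) − z₁(t) = a(t − 1 + e^{−t}) for all t ∈ [0, τ_max], so for a ≠ 0 the two agents drift away from each other and consensus is not an equilibrium solution. -/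
/-!
The function `t ↦ z₀ t - a t` and the product `t ↦ e^t (z₁ t - (a + z₀₀))` of the centred second
component with the integrating factor `e^t` both have derivative zero on `[0, τmax]`, hence are
constant there (`eq_left_of_hasDerivWithinAt_zero`). Evaluating at `0` gives the two closed forms,
and the drift formula is their difference with `z₁₀ = z₀₀`.
-/

open Filter Topology

noncomputable section

theorem eq_left_of_hasDerivWithinAt_zero {f : ℝ → ℝ} {T : ℝ}
    (hf : ∀ t ∈ Set.Icc 0 T, HasDerivWithinAt f 0 (Set.Icc 0 T) t) :
    ∀ t ∈ Set.Icc 0 T, f t = f 0 :=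
  constant_of_has_deriv_right_zero (fun t ht => (hf t ht).continuousWithinAt)
    fun t ht => (hf t ⟨ht.1, ht.2.le⟩).mono_of_mem_nhdsWithin
      (Icc_mem_nhdsGE_of_mem ht)

/-- **Counterexample (delayed consensus drifts from consensus).**
On `[0, τ_max]` with delay `τ(t) = t`, the two-agent delayed consensus
dynamics `ż₀ = a`, `ż₁ = −z₁ + z₀(0) + a` have the unique solutions
`z₀(t) = a t + z₀₀` and `z₁(t) = e^{−t} z₁₀ + (a + z₀₀)(1 − e^{−t})`; in
particular, starting at consensus, `z₀(t) − z₁(t) = a(t − 1 + e^{−t})`. -/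
theorem delayed_consensus_counterexample
    (a z₀₀ z₁₀ τmax : ℝ) (hτ : 0 < τmax)
    (z₀ z₁ : ℝ → ℝ)
    (hz₀ : ∀ t ∈ Set.Icc 0 τmax, HasDerivWithinAt z₀ a (Set.Icc 0 τmax) t)
    (hz₀0 : z₀ 0 = z₀₀)
    (hz₁ : ∀ t ∈ Set.Icc 0 τmax,
      HasDerivWithinAt z₁ (-(z₁ t) + z₀₀ + a) (Set.Icc 0 τmax) t)
    (hz₁0 : z₁ 0 = z₁₀) :
    (∀ t ∈ Set.Icc 0 τmax,
      z₀ t = a * t + z₀₀ ∧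
      z₁ t = Real.exp (-t) * z₁₀ + (a + z₀₀) * (1 - Real.exp (-t))) ∧
    (z₁₀ = z₀₀ → ∀ t ∈ Set.Icc 0 τmax,
      z₀ t - z₁ t = a * (t - 1 + Real.exp (-t))) := by
  have h₀ : ∀ t ∈ Set.Icc 0 τmax, z₀ t = a * t + z₀₀ := by
    intro t ht
    have h := eq_left_of_hasDerivWithinAt_zero (f := fun t => z₀ t - a * t) (T := τmax)
      (fun s hs => ((hz₀ s hs).sub ((hasDerivWithinAt_id s _).const_mul a)).congr_deriv
        (by ring)) t ht
    simp only [mul_zero, sub_zero, hz₀0] at h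
    linarith
  have h₁ : ∀ t ∈ Set.Icc 0 τmax,
      z₁ t = Real.exp (-t) * z₁₀ + (a + z₀₀) * (1 - Real.exp (-t)) := by
    intro t ht
    have h := eq_left_of_hasDerivWithinAt_zero
      (f := fun t => Real.exp t * (z₁ t - (a + z₀₀))) (T := τmax)
      (fun s hs => ((Real.hasDerivAt_exp s).hasDerivWithinAt.mul
        ((hz₁ s hs).sub_const (a + z₀₀))).congr_deriv (by ring)) t ht
    simp only [Real.exp_zero, one_mul, hz₁0] at h
    have he : Real.exp (-t) * Real.exp t = 1 := by rw [← Real.exp_add]; simp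
    linear_combination Real.exp (-t) * h - (z₁ t - (a + z₀₀)) * he
  refine ⟨fun t ht => ⟨h₀ t ht, h₁ t ht⟩, fun hc t ht => ?_⟩
  rw [h₀ t ht, h₁ t ht, hc]
  ring

end
end
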